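/- (Kirkwood closure process: closed form of the two-point expansion kernels, equation (4.7).) Let d ≥ 1, ς > 0 and let g : ℝ^d → [0,∞) be an even function; set h := g − 1. Define the configuration functional ρ over E = ℝ^d by ρ^{(0)} = 1 and ρ^{(n)}(x₁,…,x_n) := ς^n ∏_{1 ≤ i < j ≤ n} g(x_i − x_j), and let ρ_T ∈ A₀ be the unique functional with ρ = exp∗ ρ_T. Let x₁, x₂ ∈ ℝ^d with g(x₁ − x₂) ≠ 0 (so ρ^{(2)}(x₁,x₂) = ς² g(x₁−x₂) ≠ 0), and let F ∈ A₀ be the unique functional with D_{x₁,x₂} ρ = ρ^{(2)}(x₁,x₂) · exp∗ F. Then for every k ≥ 1 and all y₁,…,y_k ∈ ℝ^d: F^{(k)}(y₁,…,y_k) = ∏_{j=1}^{k} (1 + h(x₁ − y_j)) (1 + h(x₂ − y_j)) · ρ_T^{(k)}(y₁,…,y_k). -/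

import Mathlib

open MeasureTheory Finset

abbrev CF (E : Type) : Type := (n : ℕ) → (Fin n → E) → ℝ

namespace CF

variable {E : Type}

/-- Symmetry of a configuration functional under permutations of the arguments. -/
def IsSymm (F : CF E) : Prop :=
  ∀ (n : ℕ) (σ : Equiv.Perm (Fin n)) (x : Fin n → E), F n (x ∘ σ) = F n x

/-- The subtuple of `x` with indices in `I`, listed in increasing order. -/
noncomputable def sub {n : ℕ} (x : Fin n → E) (I : Finset (Fin n)) : Fin I.card → E :=
  fun i => x (I.orderIsoOfFin rfl i).1

/-- The convolution `Ψ ∗ Φ`. -/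
noncomputable def conv (Ψ Φ : CF E) : CF E :=
  fun n x => ∑ I : Finset (Fin n), Ψ I.card (sub x I) * Φ Iᶜ.card (sub x Iᶜ)

/-- The unit `𝟙`. -/
def unit : CF E := fun n _ => if n = 0 then 1 else 0

/-- Star-powers `Φ^{∗m}`. -/
noncomputable def starPow (Φ : CF E) : ℕ → CF E
  | 0 => unit
  | m + 1 => conv Φ (starPow Φ m)

/-- The star-exponential `exp∗ Φ = 𝟙 + Σ_{m≥1} Φ^{∗m}/m!`; on `A₀` the sum in the
`n`-th component is finite since `(Φ^{∗m})^{(n)} = 0` for `m > n`. -/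
noncomputable def starExp (Φ : CF E) : CF E :=
  fun n x => ∑ m ∈ Finset.range (n + 1), ((m.factorial : ℝ))⁻¹ * starPow Φ m n x

/-- The derivative `D_x`. -/
noncomputable def D (x : E) (Φ : CF E) : CF E := fun n y => Φ (n + 1) (Fin.cons x y)

/-- The second derivative `D_{x₁,x₂} = D_{x₁} ∘ D_{x₂}`. -/
noncomputable def D2 (x₁ x₂ : E) (Φ : CF E) : CF E := D x₁ (D x₂ Φ)

end CF

/-- Euclidean space `ℝ^d`. -/
abbrev Euc (d : ℕ) : Type := EuclideanSpace ℝ (Fin d)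

/-- The product measure on `Λ^n ⊆ (ℝ^d)^n` (Lebesgue measure restricted to `Λ`
in each coordinate). -/
noncomputable def piRestrict (d : ℕ) (Λ : Set (Euc d)) (n : ℕ) :
    MeasureTheory.Measure (Fin n → Euc d) :=
  MeasureTheory.Measure.pi fun _ => MeasureTheory.volume.restrict Λ

/-- Lebesgue measure on `(ℝ^d)^n`. -/
noncomputable def piVol (d : ℕ) (n : ℕ) : MeasureTheory.Measure (Fin n → Euc d) :=
  MeasureTheory.Measure.pi fun _ => MeasureTheory.volume

namespace CF

theorem sub_univ_eval {E : Type} (F : CF E) {n : ℕ} (x : Fin n → E) (I : Finset (Fin n))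
    (hI : I = Finset.univ) : F I.card (sub x I) = F n x := by
  have key : ∀ (m : ℕ) (hm : I.card = m) (e : Fin m → E),
      (∀ i, e i = x (I.orderIsoOfFin hm i).1) → F I.card (sub x I) = F m e := by
    intro m hm e he
    subst hm
    congr 1
    funext i
    exact (he i).symm
  have hc : I.card = n := by simp [hI]
  apply key n hc x
  intro i
  have h1 : (fun i => (I.orderIsoOfFin hc i).1) = (id : Fin n → Fin n) := by
    have h2 := Finset.orderEmbOfFin_unique (s := I) hc (f := (id : Fin n → Fin n))
      (by intro i; simp [hI]) strictMono_id
    rw [h2]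
    rfl
  have := congrFun h1 i
  simp only [id] at this
  rw [this]

theorem starPow_zero_comp {E : Type} (F : CF E) (hF : F 0 = 0) (m : ℕ) :
    starPow F (m + 1) 0 = 0 := by
  funext x
  simp only [starPow, conv]
  apply Finset.sum_eq_zero
  intro I _
  have : I = Finset.univ := Subsingleton.elim _ _
  rw [sub_univ_eval F x I this, hF]
  simp

theorem starPow_congr {E : Type} (F G : CF E) (n : ℕ) (hFG : ∀ k, k < n → F k = G k) (m : ℕ) :
    ∀ k, k < n → starPow F m k = starPow G m k := by
  induction m with
  | zero => intro k _; rfl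
  | succ m ih =>
    intro k hk
    funext x
    simp only [starPow, conv]
    apply Finset.sum_congr rfl
    intro I _
    have h1 : I.card ≤ k := by simpa using Finset.card_le_univ I
    have h2 : Iᶜ.card ≤ k := by simpa using Finset.card_le_univ Iᶜ
    rw [hFG _ (by omega), ih _ (by omega)]

theorem starPow_one_eval {E : Type} (F : CF E) (n : ℕ) (x : Fin n → E) :
    starPow F 1 n x = F n x := by
  simp only [starPow, conv]
  rw [Finset.sum_eq_single Finset.univ]
  · rw [sub_univ_eval F x _ rfl]
    simp [unit]
  · intro I _ hI
    have : Iᶜ.card ≠ 0 := by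
      simpa [Finset.card_eq_zero] using hI
    simp only [unit, if_neg this, mul_zero]
  · simp

theorem starPow_two_congr {E : Type} (F G : CF E) (hF : F 0 = 0) (hG : G 0 = 0) (n : ℕ)
    (hFG : ∀ k, k < n → F k = G k) (m : ℕ) :
    starPow F (m + 2) n = starPow G (m + 2) n := by
  funext x
  have e : ∀ H : CF E, starPow H (m + 2) = conv H (starPow H (m + 1)) := fun _ => rfl
  rw [e, e]
  simp only [conv]
  apply Finset.sum_congr rfl
  intro I _
  have h3 : I.card + Iᶜ.card = n := by simp [Finset.card_add_card_compl]
  have z : ∀ (H : CF E) (j : ℕ) (y : Fin j → E), H 0 = 0 → j = 0 → H j y = 0 := by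
    intro H j y h0 hj
    subst hj
    rw [h0]; rfl
  by_cases h1 : I.card = 0
  · rw [z F _ _ hF h1, z G _ _ hG h1]; simp
  by_cases h2 : Iᶜ.card = 0
  · rw [z (starPow F (m+1)) _ _ (starPow_zero_comp F hF m) h2,
      z (starPow G (m+1)) _ _ (starPow_zero_comp G hG m) h2]; simp
  rw [hFG _ (by omega), starPow_congr F G n hFG (m+1) _ (by omega)]

theorem starExp_inj {E : Type} (F G : CF E) (hF : F 0 = 0) (hG : G 0 = 0)
    (h : starExp F = starExp G) : ∀ n, F n = G n := by
  intro n
  induction n using Nat.strong_induction_on with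
  | _ n ih =>
    rcases n with _ | n
    · rw [hF, hG]
    funext x
    have h1 := congrFun (congrFun h (n+1)) x
    simp only [starExp] at h1
    rw [Finset.sum_range_succ', Finset.sum_range_succ', Finset.sum_range_succ',
      Finset.sum_range_succ'] at h1
    have h2 : ∀ m, starPow F (m+1+1) (n+1) = starPow G (m+1+1) (n+1) :=
      starPow_two_congr F G hF hG (n+1) ih
    simp only [h2, zero_add, starPow_one_eval] at h1
    simpa [starPow] using h1

theorem prod_sub {E : Type} (w : E → ℝ) {n : ℕ} (x : Fin n → E) (I : Finset (Fin n)) :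
    ∏ j, w (sub x I j) = ∏ j ∈ I, w (x j) := by
  rw [← Finset.prod_coe_sort I]
  exact Equiv.prod_comp (I.orderIsoOfFin rfl).toEquiv (fun i : I => w (x i.1))

/-- Multiplicative twist. -/
noncomputable def twist {E : Type} (w : E → ℝ) (F : CF E) : CF E :=
  fun n x => (∏ j, w (x j)) * F n x

theorem starPow_twist {E : Type} (w : E → ℝ) (F : CF E) (m : ℕ) :
    starPow (twist w F) m = twist w (starPow F m) := by
  induction m with
  | zero =>
    funext n x
    rcases n with _ | n <;> simp [starPow, twist, unit]
  | succ m ih =>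
    funext n x
    simp only [starPow, conv, ih]
    simp only [twist, prod_sub, conv]
    rw [Finset.mul_sum]
    apply Finset.sum_congr rfl
    intro I _
    rw [← Finset.prod_mul_prod_compl I]
    ring

theorem starExp_twist {E : Type} (w : E → ℝ) (F : CF E) :
    starExp (twist w F) = twist w (starExp F) := by
  funext n x
  simp only [starExp, starPow_twist]
  simp only [twist, starExp]
  rw [Finset.mul_sum]
  apply Finset.sum_congr rfl
  intro m _
  ring

theorem prod_lt_cons {E : Type} (f : E → E → ℝ) {n : ℕ} (a : E) (y : Fin n → E) :
    ∏ p ∈ (Finset.univ : Finset (Fin (n+1) × Fin (n+1))).filter (fun p => p.1 < p.2),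
      f ((Fin.cons a y : Fin (n+1) → E) p.1) ((Fin.cons a y : Fin (n+1) → E) p.2) =
    (∏ j, f a (y j)) *
    ∏ p ∈ (Finset.univ : Finset (Fin n × Fin n)).filter (fun p => p.1 < p.2),
      f (y p.1) (y p.2) := by
  simp only [Finset.prod_filter, Fintype.prod_prod_type]
  rw [Fin.prod_univ_succ]
  simp [Fin.prod_univ_succ]

end CF

open CF Finset in
/-- eq. (4.7): closed form of the two-point expansion kernels of
the Kirkwood closure process. -/
theorem kirkwood_twoPoint_kernel_closed_form (d : ℕ) (hd : 1 ≤ d)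
    (ς : ℝ) (hς : 0 < ς) (g h : Euc d → ℝ)
    (hg_even : ∀ z, g (-z) = g z) (hg_nonneg : ∀ z, 0 ≤ g z)
    (hh : ∀ z, h z = g z - 1)
    (ρ ρT : CF (Euc d))
    (hρ : ∀ (n : ℕ) (x : Fin n → Euc d),
      ρ n x = ς ^ n *
        ∏ p ∈ (Finset.univ : Finset (Fin n × Fin n)).filter (fun p => p.1 < p.2),
          g (x p.1 - x p.2))
    (hρT0 : ρT 0 = 0) (hρTsymm : IsSymm ρT) (hρTexp : starExp ρT = ρ)
    (x₁ x₂ : Euc d) (hg12 : g (x₁ - x₂) ≠ 0)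
    (F : CF (Euc d)) (hF0 : F 0 = 0) (hFsymm : IsSymm F)
    (hF : D2 x₁ x₂ ρ = ρ 2 ![x₁, x₂] • starExp F) :
    ∀ (k : ℕ), 1 ≤ k → ∀ y : Fin k → Euc d,
      F k y =
        (∏ j : Fin k, (1 + h (x₁ - y j)) * (1 + h (x₂ - y j))) * ρT k y := by
  have hρ' : ∀ (n : ℕ) (a : Euc d) (y : Fin n → Euc d),
      ρ (n+1) (Fin.cons a y) = ς * (∏ j, g (a - y j)) * ρ n y := by
    intro n a y
    rw [hρ, hρ, prod_lt_cons (fun u v => g (u - v))]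
    ring
  have hρ0 : ∀ y, ρ 0 y = 1 := by
    intro y; rw [hρ]; simp
  have h2 : ρ 2 ![x₁, x₂] = ς ^ 2 * g (x₁ - x₂) := by
    have e1 := hρ' 1 x₁ (Fin.cons x₂ ![])
    rw [hρ' 0, hρ0] at e1
    have e2 : (![x₁, x₂] : Fin 2 → Euc d) = Fin.cons x₁ (Fin.cons x₂ ![]) := rfl
    rw [e2, e1]
    simp
    ring
  set w : Euc d → ℝ := fun z => (1 + h (x₁ - z)) * (1 + h (x₂ - z)) with hw
  have hexp : starExp F = starExp (twist w ρT) := by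
    rw [starExp_twist, hρTexp]
    funext n y
    have e := congrFun (congrFun hF n) y
    simp only [D2, D, Pi.smul_apply, smul_eq_mul] at e
    rw [hρ', hρ', h2, Fin.prod_univ_succ] at e
    simp only [Fin.cons_zero, Fin.cons_succ] at e
    have e3 : g (x₂ - x₁) = g (x₁ - x₂) := by rw [← hg_even, neg_sub]
    have hne : ς ^ 2 * g (x₁ - x₂) ≠ 0 := mul_ne_zero (by positivity) hg12
    apply mul_left_cancel₀ hne
    rw [← e, e3]
    simp only [twist, hw, hh, add_sub_cancel, Finset.prod_mul_distrib]
    ring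
  intro k _ y
  have := starExp_inj F (twist w ρT) hF0 (by funext y; simp [twist, hρT0]) hexp k
  rw [this]
  rfl
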